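/- arXiv:2408.06313 — 7 statements merged into one kernel-verified Lean document; each statement's English description precedes it below -/
import Mathlib

section
/- For every ε ∈ (0,1], the function u_ε : [0,1] × [0,1] → ℝ defined by u_ε(t,ξ) = 𝟙_{[1−t−ε/2, 1−t+ε/2]}(ξ) satisfies: (i) for every t ∈ [0,1], (∫₀¹ u_ε(t,ξ)² dξ)^{1/2} ≤ √ε; and (ii) ∫₀¹ u_ε(1−r, r) dr = 1. -/
open MeasureTheory

/-- For `ε ∈ (0,1]`, the input `u_ε(t,ξ) = 𝟙_{[1-t-ε/2, 1-t+ε/2]}(ξ)` of the dual transport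
system has `L²([0,1])`-norm at most `√ε` at every time `t ∈ [0,1]`, while the output of the
dual system at time `1`, namely `∫₀¹ u_ε(1-r, r) dr`, equals `1`. -/
theorem stmt_1 (ε : ℝ) (hε : ε ∈ Set.Ioc (0:ℝ) 1) :
    (∀ t ∈ Set.Icc (0:ℝ) 1,
      Real.sqrt (∫ ξ in (0:ℝ)..1,
          (Set.indicator (Set.Icc (1 - t - ε/2) (1 - t + ε/2)) (fun _ => (1:ℝ)) ξ) ^ 2)
        ≤ Real.sqrt ε) ∧
    (∫ r in (0:ℝ)..1,
        Set.indicator (Set.Icc (1 - (1 - r) - ε/2) (1 - (1 - r) + ε/2)) (fun _ => (1:ℝ)) r)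
      = 1 := by
  obtain ⟨h0, h1⟩ := hε
  constructor
  · intro t _
    apply Real.sqrt_le_sqrt
    have e : ∀ ξ : ℝ, (Set.indicator (Set.Icc (1 - t - ε/2) (1 - t + ε/2))
        (fun _ => (1:ℝ)) ξ) ^ 2
        = Set.indicator (Set.Icc (1 - t - ε/2) (1 - t + ε/2)) (fun _ => (1:ℝ)) ξ := by
      intro ξ
      by_cases h : ξ ∈ Set.Icc (1 - t - ε/2) (1 - t + ε/2) <;> simp [Set.indicator, h]
    simp_rw [e]
    rw [intervalIntegral.integral_of_le zero_le_one,
      setIntegral_indicator measurableSet_Icc, setIntegral_const, smul_eq_mul, mul_one]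
    calc _ ≤ volume.real (Set.Icc (1 - t - ε/2) (1 - t + ε/2)) :=
          measureReal_mono Set.inter_subset_right (by simp)
      _ = ε := by
          rw [Real.volume_real_Icc_of_le (by linarith)]
          ring
  · have e : ∀ r : ℝ, Set.indicator (Set.Icc (1 - (1 - r) - ε/2) (1 - (1 - r) + ε/2))
        (fun _ => (1:ℝ)) r = 1 := by
      intro r
      apply Set.indicator_of_mem
      constructor <;> linarith
    simp_rw [e]
    simp
end

section
/- Let (T(t))_{t≥0} be the nilpotent left-shift semigroup on L²([0,1],ℝ), given by (T(t)f)(ξ) = f(ξ+t) if ξ+t ≤ 1 and 0 otherwise. Let t ≥ 0 and let u : [0,∞) × [0,1] → ℝ be jointly measurable with ∫₀ᵗ (∫₀¹ u(s,ξ)² dξ)^{1/2} ds < ∞. Then the Bochner integral ∫₀ᵗ T(t−s) u(s,·) ds in L²([0,1],ℝ) equals (as an element of L²([0,1],ℝ)) the function ξ ↦ ∫_{max(ξ+t−1, 0)}^{t} u(s, ξ+t−s) ds. -/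
open MeasureTheory

theorem aux_meas_ball {α E : Type*} [MeasurableSpace α] [PseudoMetricSpace E]
    [SecondCountableTopology E] [MeasurableSpace E] [BorelSpace E] (F : α → E)
    (h : ∀ g : E, Measurable fun a => dist (F a) g) : Measurable F := by
  apply measurable_of_isOpen
  intro U hU
  have h1 : ∀ x : U, ∃ r > 0, Metric.ball (x : E) r ⊆ U := fun x =>
    Metric.isOpen_iff.1 hU x x.2
  choose r hr hrU using h1
  obtain ⟨C, hC, hCU⟩ := TopologicalSpace.isOpen_iUnion_countable
    (fun x : U => Metric.ball (x : E) (r x)) (fun x => Metric.isOpen_ball)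
  have h2 : U = ⋃ x ∈ C, Metric.ball (x : E) (r x) := by
    rw [hCU]
    apply Set.Subset.antisymm
    · intro x hx
      exact Set.mem_iUnion.2 ⟨⟨x, hx⟩, Metric.mem_ball_self (hr _)⟩
    · exact Set.iUnion_subset hrU
  rw [h2, Set.preimage_iUnion₂]
  refine MeasurableSet.biUnion hC fun x _ => ?_
  exact measurableSet_lt (h x) measurable_const

theorem aux_meas {α : Type*} [MeasurableSpace α] (μ : Measure ℝ) [IsProbabilityMeasure μ]
    (F : α → Lp ℝ 2 μ) (v : α → ℝ → ℝ) (hv : Measurable (Function.uncurry v))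
    (hF : ∀ s, (F s : ℝ → ℝ) =ᵐ[μ] v s) : StronglyMeasurable F := by
  have : Fact ((2:ENNReal) ≠ ⊤) := ⟨by simp⟩
  borelize ↥(Lp ℝ 2 μ)
  apply Measurable.stronglyMeasurable
  apply aux_meas_ball
  intro g
  have hg : Measurable (g : ℝ → ℝ) := (Lp.stronglyMeasurable g).measurable
  have : (fun a => dist (F a) g)
      = fun a => ((∫⁻ x, ‖v a x - g x‖ₑ ^ (2:ℝ) ∂μ) ^ (1/(2:ℝ))).toReal := by
    funext a
    rw [Lp.dist_def]
    have : eLpNorm (⇑(F a) - ⇑g) 2 μ = eLpNorm (v a - ⇑g) 2 μ :=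
      eLpNorm_congr_ae ((hF a).sub (Filter.EventuallyEq.refl _ _))
    rw [this, eLpNorm_eq_lintegral_rpow_enorm_toReal (by simp) (by simp)]
    simp
  rw [this]
  apply Measurable.ennreal_toReal
  apply Measurable.pow_const
  apply Measurable.lintegral_prod_right'
    (f := fun p : α × ℝ => ‖v p.1 p.2 - g p.2‖ₑ ^ (2:ℝ))
  have : Measurable fun p : α × ℝ => v p.1 p.2 := hv
  fun_prop

theorem aux_int {α : Type*} [MeasurableSpace α] (ν : Measure α) [SFinite ν]
    (μ : Measure ℝ) [IsProbabilityMeasure μ]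
    (F : α → Lp ℝ 2 μ) (v : α → ℝ → ℝ) (hv : Measurable (Function.uncurry v))
    (hF : ∀ s, (F s : ℝ → ℝ) =ᵐ[μ] v s) (b : α → ℝ) (hb : Integrable b ν)
    (hFb : ∀ s, ‖F s‖ ≤ b s) :
    ((∫ s, F s ∂ν : Lp ℝ 2 μ) : ℝ → ℝ) =ᵐ[μ] fun ξ => ∫ s, v s ξ ∂ν := by
  have hFi : Integrable F ν :=
    hb.mono' (aux_meas μ F v hv hF).aestronglyMeasurable (Filter.Eventually.of_forall hFb)
  have hF1 : ∀ s, Integrable (F s : ℝ → ℝ) μ := fun s => (Lp.memLp (F s)).integrable (by norm_num)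
  have hvi : Integrable (Function.uncurry v) (ν.prod μ) := by
    rw [integrable_prod_iff hv.aestronglyMeasurable]
    refine ⟨Filter.Eventually.of_forall fun s => (hF1 s).congr (hF s), ?_⟩
    refine hb.mono' ?_ (Filter.Eventually.of_forall fun s => ?_)
    · exact (hv.norm.stronglyMeasurable.integral_prod_right').aestronglyMeasurable
    · rw [Real.norm_of_nonneg (integral_nonneg fun _ => norm_nonneg _)]
      refine le_trans ?_ (hFb s)
      have h1 : ∫ y, ‖Function.uncurry v (s, y)‖ ∂μ = ∫ y, ‖F s y‖ ∂μ := by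
        apply integral_congr_ae
        filter_upwards [hF s] with y hy
        simp [hy, Function.uncurry]
      rw [h1, Lp.norm_def, integral_norm_eq_lintegral_enorm (hF1 s).1,
        ← eLpNorm_one_eq_lintegral_enorm]
      exact ENNReal.toReal_mono (Lp.eLpNorm_ne_top _)
        (eLpNorm_le_eLpNorm_of_exponent_le (by norm_num) (hF1 s).1)
  apply Integrable.ae_eq_of_forall_setIntegral_eq
  · exact (Lp.memLp _).integrable (by norm_num)
  · exact hvi.integral_prod_right
  intro A hA hμA
  have e1 : ∀ f : Lp ℝ 2 μ, ∫ x in A, f x ∂μ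
      = inner ℝ (indicatorConstLp 2 hA hμA.ne (1:ℝ)) f := fun f =>
    (L2.inner_indicatorConstLp_one hA hμA.ne f).symm
  rw [e1, ← integral_inner hFi]
  have e2 : ∀ s, inner ℝ (indicatorConstLp 2 hA hμA.ne (1:ℝ)) (F s) = ∫ x in A, v s x ∂μ := by
    intro s
    rw [← e1]
    exact integral_congr_ae (ae_restrict_of_ae (hF s))
  simp_rw [e2]
  apply integral_integral_swap
  refine hvi.mono_measure ?_
  exact Measure.prod_mono le_rfl Measure.restrict_le_self

theorem aux_ae (μ : Measure ℝ) (hμ : μ = volume.restrict (Set.Icc (0:ℝ) 1)) (p : ℝ → Prop) :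
    (∀ᵐ x ∂μ, p x) ↔ ∀ᵐ x, x ∈ Set.Icc (0:ℝ) 1 → p x := by
  rw [hμ]; exact ae_restrict_iff' measurableSet_Icc

theorem aux_norm (μ : Measure ℝ) (hμ : μ = volume.restrict (Set.Icc (0:ℝ) 1))
    (τ : ℝ) (hτ : 0 ≤ τ) (f g : Lp ℝ 2 μ)
    (h : (g : ℝ → ℝ) =ᵐ[μ] fun ξ => if ξ + τ ≤ 1 then (f : ℝ → ℝ) (ξ + τ) else 0) :
    ‖g‖ ≤ ‖f‖ := by
  rw [Lp.norm_def, Lp.norm_def]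
  refine ENNReal.toReal_mono (Lp.eLpNorm_ne_top _) ?_
  rw [eLpNorm_congr_ae h]
  have hf : StronglyMeasurable (f : ℝ → ℝ) := Lp.stronglyMeasurable f
  set k : ℝ → ℝ := (Set.Icc (0:ℝ) 1).indicator f with hk
  have hkm : StronglyMeasurable k := hf.indicator measurableSet_Icc
  calc _ ≤ eLpNorm (k ∘ fun x => x + τ) 2 μ := by
        apply eLpNorm_mono_ae
        refine (aux_ae μ hμ _).2 (Filter.Eventually.of_forall fun ξ hξ => ?_)
        split_ifs with h1
        · have : ξ + τ ∈ Set.Icc (0:ℝ) 1 := ⟨by linarith [hξ.1], h1⟩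
          simp [hk, Set.indicator_of_mem this]
        · simp
    _ ≤ eLpNorm (k ∘ fun x => x + τ) 2 volume := by
        apply eLpNorm_mono_measure
        rw [hμ]; exact Measure.restrict_le_self
    _ = eLpNorm k 2 volume :=
        eLpNorm_comp_measurePreserving hkm.aestronglyMeasurable
          (measurePreserving_add_right volume τ)
    _ = eLpNorm f 2 μ := by
        rw [hk, eLpNorm_indicator_eq_eLpNorm_restrict measurableSet_Icc, ← hμ]

/-- For the nilpotent left-shift semigroup `T` on `L²([0,1],ℝ)` (given by
`(T t f) ξ = f (ξ + t)` if `ξ + t ≤ 1` and `0` otherwise), the Bochner integral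
`∫₀ᵗ T (t-s) u(s,·) ds` equals, as an element of `L²([0,1],ℝ)`, the function
`ξ ↦ ∫_{max (ξ+t-1) 0}^{t} u (s, ξ+t-s) ds`. -/
theorem stmt_3
    (μ : Measure ℝ) (hμ : μ = volume.restrict (Set.Icc (0:ℝ) 1))
    (T : ℝ → Lp ℝ 2 μ →L[ℝ] Lp ℝ 2 μ)
    (hT : ∀ t, 0 ≤ t → ∀ f : Lp ℝ 2 μ,
      (T t f : ℝ → ℝ) =ᵐ[μ] fun ξ => if ξ + t ≤ 1 then (f : ℝ → ℝ) (ξ + t) else 0)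
    (t : ℝ) (ht : 0 ≤ t)
    (u : ℝ → ℝ → ℝ) (hu : Measurable (Function.uncurry u))
    (uL : ℝ → Lp ℝ 2 μ) (huL : ∀ s, (uL s : ℝ → ℝ) =ᵐ[μ] u s)
    (hint : IntervalIntegrable uL volume 0 t) :
    ((∫ s in (0:ℝ)..t, T (t - s) (uL s) : Lp ℝ 2 μ) : ℝ → ℝ) =ᵐ[μ]
      fun ξ => ∫ s in (max (ξ + t - 1) 0)..t, u s (ξ + t - s) := by
  classical
  have : IsProbabilityMeasure μ := ⟨by rw [hμ]; simp⟩
  let F : ℝ → Lp ℝ 2 μ := fun s => if s ∈ Set.Ioc 0 t then T (t - s) (uL s) else 0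
  let v : ℝ → ℝ → ℝ := fun s ξ =>
    if s ∈ Set.Ioc 0 t ∧ ξ + t - 1 ≤ s then u s (ξ + t - s) else 0
  have hv : Measurable (Function.uncurry v) := by
    have h1 : Measurable fun p : ℝ × ℝ => u p.1 (p.2 + t - p.1) :=
      hu.comp (f := fun p : ℝ × ℝ => (p.1, p.2 + t - p.1)) (by fun_prop)
    refine Measurable.ite (p := fun p : ℝ × ℝ => p.1 ∈ Set.Ioc 0 t ∧ p.2 + t - 1 ≤ p.1) ?_ h1
      measurable_const
    exact (measurable_fst measurableSet_Ioc).inter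
      (measurableSet_le (f := fun p : ℝ × ℝ => p.2 + t - 1) (g := fun p : ℝ × ℝ => p.1)
        (by fun_prop) (by fun_prop))
  have hF : ∀ s, (F s : ℝ → ℝ) =ᵐ[μ] v s := by
    intro s
    by_cases hs : s ∈ Set.Ioc 0 t
    · have hτ : 0 ≤ t - s := by linarith [hs.2]
      have h1 := hT (t - s) hτ (uL s)
      have h2 : ∀ᵐ x, x ∈ Set.Icc (0:ℝ) 1 → uL s x = u s x :=
        (aux_ae μ hμ _).1 (huL s)
      have h3 := (measurePreserving_add_right volume (t - s)).quasiMeasurePreserving.ae h2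
      have h4 : ∀ᵐ x ∂μ, x + (t - s) ∈ Set.Icc (0:ℝ) 1 →
          uL s (x + (t - s)) = u s (x + (t - s)) :=
        (aux_ae μ hμ _).2 (h3.mono fun x hx _ => hx)
      have h5 : ∀ᵐ x ∂μ, x ∈ Set.Icc (0:ℝ) 1 := by
        rw [hμ]; exact ae_restrict_mem measurableSet_Icc
      have hFs : F s = T (t - s) (uL s) := if_pos hs
      rw [hFs]
      filter_upwards [h1, h4, h5] with x hx1 hx4 hx5
      rw [hx1]
      by_cases hc : x + (t - s) ≤ 1
      · have hc' : x + t - 1 ≤ s := by linarith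
        rw [if_pos hc, hx4 ⟨by linarith [hx5.1], hc⟩]
        simp only [v]
        rw [if_pos ⟨hs, hc'⟩, add_sub_assoc]
      · have hc' : ¬ (x + t - 1 ≤ s) := fun h => hc (by linarith)
        rw [if_neg hc]
        simp only [v]
        rw [if_neg fun h => hc' h.2]
    · have hFs : F s = 0 := if_neg hs
      rw [hFs]
      filter_upwards [Lp.coeFn_zero ℝ 2 μ] with x hx
      rw [hx]
      simp only [v]
      rw [if_neg fun h => hs h.1]
      rfl
  have hb : Integrable (fun s => ‖uL s‖) (volume.restrict (Set.Ioc 0 t)) :=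
    ((intervalIntegrable_iff_integrableOn_Ioc_of_le ht).1 hint).norm
  have key := aux_int (volume.restrict (Set.Ioc 0 t)) μ F v hv hF _ hb (by
    intro s
    by_cases hs : s ∈ Set.Ioc 0 t
    · have hFs : F s = T (t - s) (uL s) := if_pos hs
      rw [hFs]
      have hτ : 0 ≤ t - s := by linarith [hs.2]
      exact aux_norm μ hμ (t - s) hτ _ _ (hT _ hτ _)
    · have hFs : F s = 0 := if_neg hs
      rw [hFs]; simp)
  have e0 : (∫ s in (0:ℝ)..t, T (t - s) (uL s)) = ∫ s in Set.Ioc 0 t, F s := by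
    rw [intervalIntegral.integral_of_le ht]
    exact setIntegral_congr_fun measurableSet_Ioc fun s hs => (if_pos hs).symm
  rw [e0]
  refine key.trans ?_
  have h5 : ∀ᵐ x ∂μ, x ∈ Set.Icc (0:ℝ) 1 := by
    rw [hμ]; exact ae_restrict_mem measurableSet_Icc
  filter_upwards [h5] with ξ hξ
  have hm : max (ξ + t - 1) 0 ≤ t := max_le (by linarith [hξ.2]) ht
  rw [intervalIntegral.integral_of_le hm, ← integral_Icc_eq_integral_Ioc,
    ← integral_Icc_eq_integral_Ioc, ← integral_indicator measurableSet_Icc,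
    ← integral_indicator measurableSet_Icc]
  apply integral_congr_ae
  have h0 : ∀ᵐ s : ℝ, s ≠ 0 := by simp [ae_iff]
  filter_upwards [h0] with s hs0
  simp only [Set.indicator, v, Set.mem_Icc, Set.mem_Ioc, max_le_iff]
  by_cases h1 : 0 ≤ s
  · have : 0 < s := lt_of_le_of_ne h1 (Ne.symm hs0)
    by_cases h2 : s ≤ t <;> by_cases h3 : ξ + t - 1 ≤ s <;> simp [h1, h2, h3, this]
  · simp [h1]
end

section
/- Let X and Y be Banach spaces, let (T(t))_{t≥0} be a strongly continuous semigroup of bounded linear operators on X, and let C : X → Y be a bounded linear operator which is infinite-time L¹-observation-admissible with constant κ, i.e. ∫₀^∞ ‖C(T(t)x)‖_Y dt ≤ κ‖x‖_X for all x ∈ X. Then for every Bochner-integrable u ∈ L¹([0,∞),X), the function t ↦ C(∫₀ᵗ T(t−s) u(s) ds) lies in L¹([0,∞),Y) and ∫₀^∞ ‖C(∫₀ᵗ T(t−s) u(s) ds)‖_Y dt ≤ κ ∫₀^∞ ‖u(s)‖_X ds. -/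
open MeasureTheory

/-- If `C` is a bounded operator which is infinite-time `L¹`-observation-admissible with
constant `κ` for a `C₀`-semigroup `T` on `X`, then for every Bochner-integrable input
`u ∈ L¹([0,∞),X)` the function `t ↦ C (∫₀ᵗ T(t-s) u(s) ds)` lies in `L¹([0,∞),Y)` with
`∫₀^∞ ‖C (∫₀ᵗ T(t-s) u(s) ds)‖ dt ≤ κ ∫₀^∞ ‖u(s)‖ ds`. -/
theorem stmt_6 {X Y : Type*} [NormedAddCommGroup X] [NormedSpace ℝ X] [CompleteSpace X]
    [NormedAddCommGroup Y] [NormedSpace ℝ Y] [CompleteSpace Y]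
    (T : ℝ → X →L[ℝ] X)
    (hT0 : T 0 = 1)
    (hTadd : ∀ s t : ℝ, 0 ≤ s → 0 ≤ t → T (s + t) = (T s).comp (T t))
    (hTcont : ∀ x : X, ContinuousOn (fun t => T t x) (Set.Ici 0))
    (C : X →L[ℝ] Y) (κ : ℝ) (hκ : 0 ≤ κ)
    (hadm : ∀ x : X,
      ∫⁻ t in Set.Ici (0:ℝ), (‖C (T t x)‖₊ : ENNReal) ≤ ENNReal.ofReal (κ * ‖x‖))
    (u : ℝ → X) (hu : IntegrableOn u (Set.Ici 0)) :
    IntegrableOn (fun t => C (∫ s in (0:ℝ)..t, T (t - s) (u s))) (Set.Ici 0) ∧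
    ∫ t in Set.Ici (0:ℝ), ‖C (∫ s in (0:ℝ)..t, T (t - s) (u s))‖ ≤
      κ * ∫ s in Set.Ici (0:ℝ), ‖u s‖ := by
  set μ : Measure ℝ := volume.restrict (Set.Ici (0:ℝ)) with hμ
  have hu' : Integrable u μ := hu
  obtain ⟨v, hv, huv⟩ := hu'.aestronglyMeasurable
  let S : ℝ → X →L[ℝ] X := fun t => T (max t 0)
  have hScont : ∀ x, Continuous fun t => S t x := by
    intro x
    exact (hTcont x).comp_continuous (by fun_prop) (fun t => Set.mem_Ici.2 (le_max_right _ _))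
  have hS1 : StronglyMeasurable (Function.uncurry fun r s : ℝ => S r (v s)) := by
    apply stronglyMeasurable_uncurry_of_continuous_of_stronglyMeasurable
    · intro s; exact hScont (v s)
    · intro r; exact (S r).continuous.comp_stronglyMeasurable hv
  have hS2 : StronglyMeasurable (fun p : ℝ × ℝ => S (p.1 - p.2) (v p.2)) :=
    hS1.comp_measurable (g := fun p : ℝ × ℝ => (p.1 - p.2, p.2)) (by fun_prop)
  let A : Set (ℝ × ℝ) := {p | 0 < p.2 ∧ p.2 ≤ p.1}
  have hA : MeasurableSet A :=
    (measurableSet_lt measurable_const measurable_snd).inter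
      (measurableSet_le measurable_snd measurable_fst)
  let F : ℝ × ℝ → X := A.indicator (fun p : ℝ × ℝ => S (p.1 - p.2) (v p.2))
  have hF : StronglyMeasurable F := hS2.indicator hA
  let H : ℝ → X := fun t => ∫ s, F (t, s) ∂μ
  have hH : StronglyMeasurable H := hF.integral_prod_right'
  have hHeq : ∀ t, 0 ≤ t → (∫ s in (0:ℝ)..t, T (t - s) (u s)) = H t := by
    intro t ht
    have h1 : ∀ s, F (t, s) = (Set.Ioc 0 t).indicator (fun s => S (t - s) (v s)) s := by
      intro s
      simp only [F, Set.indicator, A, Set.mem_ofPred_eq, Set.mem_Ioc]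
    have hsub : Set.Ioc 0 t ⊆ Set.Ici (0:ℝ) := fun s hs => hs.1.le
    simp only [H, h1]
    rw [integral_indicator measurableSet_Ioc, hμ, Measure.restrict_restrict measurableSet_Ioc,
      Set.inter_eq_left.2 hsub, intervalIntegral.integral_of_le ht]
    apply integral_congr_ae
    have h2 : ∀ᵐ s ∂(volume.restrict (Set.Ioc 0 t)), u s = v s :=
      ae_mono (Measure.restrict_mono hsub le_rfl) huv
    filter_upwards [h2, ae_restrict_mem measurableSet_Ioc] with s hs hm
    simp only [S]
    rw [hs, max_eq_left (sub_nonneg.2 hm.2)]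
  have hCle : ∀ t, ‖C (H t)‖ₑ ≤ ∫⁻ s, ‖C (F (t, s))‖ₑ ∂μ := by
    intro t
    by_cases hi : Integrable (fun s => F (t, s)) μ
    · rw [← C.integral_comp_comm hi]
      exact enorm_integral_le_lintegral_enorm _
    · simp [H, integral_undef hi]
  have hinner : ∀ s, ∫⁻ t, ‖C (F (t, s))‖ₑ ∂μ ≤ ENNReal.ofReal κ * ‖v s‖ₑ := by
    intro s
    let g : ℝ → ENNReal := (Set.Ici (0:ℝ)).indicator (fun t => ‖C (T t (v s))‖ₑ)
    calc ∫⁻ t, ‖C (F (t, s))‖ₑ ∂μ ≤ ∫⁻ t, ‖C (F (t, s))‖ₑ := 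
          lintegral_mono' Measure.restrict_le_self le_rfl
      _ ≤ ∫⁻ t, g (t - s) := by
          apply lintegral_mono
          intro t
          by_cases h : (t, s) ∈ A
          · have h3 : 0 ≤ t - s := sub_nonneg.2 h.2
            simp only [F, g]
            rw [Set.indicator_of_mem h, Set.indicator_of_mem (show t - s ∈ Set.Ici 0 from h3)]
            simp only [S]
            rw [max_eq_left h3]
          · simp only [F]
            rw [Set.indicator_of_notMem h]
            simp
      _ = ∫⁻ t, g t := lintegral_sub_right_eq_self g s
      _ = ∫⁻ t in Set.Ici (0:ℝ), ‖C (T t (v s))‖ₑ := lintegral_indicator measurableSet_Ici _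
      _ ≤ ENNReal.ofReal (κ * ‖v s‖) := hadm (v s)
      _ = ENNReal.ofReal κ * ‖v s‖ₑ := by
          rw [ENNReal.ofReal_mul hκ, ofReal_norm]
  have hCF : StronglyMeasurable (fun p => C (F p)) := C.continuous.comp_stronglyMeasurable hF
  have hmain : ∫⁻ t, ‖C (H t)‖ₑ ∂μ ≤ ENNReal.ofReal κ * ∫⁻ s, ‖u s‖ₑ ∂μ := by
    calc ∫⁻ t, ‖C (H t)‖ₑ ∂μ ≤ ∫⁻ t, ∫⁻ s, ‖C (F (t, s))‖ₑ ∂μ ∂μ := lintegral_mono hCle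
      _ = ∫⁻ s, ∫⁻ t, ‖C (F (t, s))‖ₑ ∂μ ∂μ := 
          lintegral_lintegral_swap (f := fun t s => ‖C (F (t, s))‖ₑ) hCF.enorm.aemeasurable
      _ ≤ ∫⁻ s, ENNReal.ofReal κ * ‖v s‖ₑ ∂μ := lintegral_mono hinner
      _ = ENNReal.ofReal κ * ∫⁻ s, ‖v s‖ₑ ∂μ := lintegral_const_mul _ hv.enorm
      _ = ENNReal.ofReal κ * ∫⁻ s, ‖u s‖ₑ ∂μ := by
          congr 1
          apply lintegral_congr_ae
          filter_upwards [huv] with s hs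
          rw [hs]
  have hfin : ENNReal.ofReal κ * ∫⁻ s, ‖u s‖ₑ ∂μ < ⊤ :=
    ENNReal.mul_lt_top ENNReal.ofReal_lt_top hu'.2
  have hCHm : StronglyMeasurable (fun t => C (H t)) := C.continuous.comp_stronglyMeasurable hH
  have hint : Integrable (fun t => C (H t)) μ :=
    ⟨hCHm.aestronglyMeasurable, hmain.trans_lt hfin⟩
  have hae : (fun t => C (∫ s in (0:ℝ)..t, T (t - s) (u s))) =ᵐ[μ] fun t => C (H t) := by
    filter_upwards [ae_restrict_mem measurableSet_Ici] with t ht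
    rw [hHeq t ht]
  refine ⟨hint.congr hae.symm, ?_⟩
  have hnorm : ∫ t, ‖C (∫ s in (0:ℝ)..t, T (t - s) (u s))‖ ∂μ = ∫ t, ‖C (H t)‖ ∂μ :=
    integral_congr_ae (hae.fun_comp norm)
  rw [hnorm, integral_norm_eq_lintegral_enorm hint.1,
    integral_norm_eq_lintegral_enorm hu'.1]
  calc _ ≤ (ENNReal.ofReal κ * ∫⁻ s, ‖u s‖ₑ ∂μ).toReal := ENNReal.toReal_mono hfin.ne hmain
    _ = _ := by rw [ENNReal.toReal_mul, ENNReal.toReal_ofReal hκ]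
end

section
/- Let X and Y be Banach spaces, let (T(t))_{t≥0} be a strongly continuous semigroup of bounded linear operators on X satisfying ‖T(t)‖ ≤ ρ e^{ωt} for all t ≥ 0 and some ρ > 0, ω ∈ ℝ, and let C : X → Y be a bounded linear operator. Suppose there exists c > 0 such that for every Bochner-integrable u ∈ L¹([0,∞),X) one has ∫₀^∞ ‖C(∫₀ᵗ T(t−s) u(s) ds)‖_Y dt ≤ c ∫₀^∞ ‖u(s)‖_X ds. Then for every x ∈ X, ∫₀^∞ ‖C(T(t)x)‖_Y dt ≤ c · ρ · max{1, e^{ω}} · ‖x‖_X; in particular C is infinite-time L¹-observation-admissible for (T(t)). -/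
open MeasureTheory

/-- If a `C₀`-semigroup `T` on `X` satisfies `‖T t‖ ≤ ρ e^{ω t}` and the bounded operator
`C : X → Y` satisfies the `L¹` maximal-regularity-type bound
`∫₀^∞ ‖C (∫₀ᵗ T(t-s) u(s) ds)‖ dt ≤ c ∫₀^∞ ‖u‖` for all `u ∈ L¹([0,∞),X)`, then `C` is
infinite-time `L¹`-observation-admissible with constant `c · ρ · max 1 (e^ω)`. -/
theorem stmt_7 {X Y : Type*} [NormedAddCommGroup X] [NormedSpace ℝ X] [CompleteSpace X]
    [NormedAddCommGroup Y] [NormedSpace ℝ Y] [CompleteSpace Y]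
    (T : ℝ → X →L[ℝ] X)
    (hT0 : T 0 = 1)
    (hTadd : ∀ s t : ℝ, 0 ≤ s → 0 ≤ t → T (s + t) = (T s).comp (T t))
    (hTcont : ∀ x : X, ContinuousOn (fun t => T t x) (Set.Ici 0))
    (ρ ω : ℝ) (hρ : 0 < ρ)
    (hTbound : ∀ t : ℝ, 0 ≤ t → ‖T t‖ ≤ ρ * Real.exp (ω * t))
    (C : X →L[ℝ] Y) (c : ℝ) (hc : 0 < c)
    (hbound : ∀ u : ℝ → X, IntegrableOn u (Set.Ici 0) →
      ∫⁻ t in Set.Ici (0:ℝ), (‖C (∫ s in (0:ℝ)..t, T (t - s) (u s))‖₊ : ENNReal) ≤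
        ENNReal.ofReal (c * ∫ s in Set.Ici (0:ℝ), ‖u s‖)) :
    ∀ x : X, ∫⁻ t in Set.Ici (0:ℝ), (‖C (T t x)‖₊ : ENNReal) ≤
      ENNReal.ofReal (c * ρ * max 1 (Real.exp ω) * ‖x‖) := by
  intro x
  set M : ℝ := ρ * max 1 (Real.exp ω) with hM
  have key : ∀ ε : ℝ, 0 < ε → ε ≤ 1 →
      ∫⁻ t in Set.Ici ε, (‖C (T t x)‖₊ : ENNReal) ≤
        ENNReal.ofReal (c * ρ * max 1 (Real.exp ω) * ‖x‖) := by
    intro ε hε hε1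
    set u : ℝ → X := Set.indicator (Set.Ioc 0 ε) (fun s => ε⁻¹ • T s x) with hu
    have hIcc : IntegrableOn (fun s => ε⁻¹ • T s x) (Set.Ioc 0 ε) := by
      have h1 : ContinuousOn (fun s => ε⁻¹ • T s x) (Set.Icc 0 ε) :=
        ((hTcont x).mono Set.Icc_subset_Ici_self).const_smul _
      exact (h1.integrableOn_compact isCompact_Icc).mono_set Set.Ioc_subset_Icc_self
    have hint : Integrable u := (integrable_indicator_iff measurableSet_Ioc).2 hIcc
    have hb := hbound u hint.integrableOn
    have hconv : ∀ t ∈ Set.Ici ε, ∫ s in (0:ℝ)..t, T (t - s) (u s) = T t x := by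
      intro t ht
      have ht : ε ≤ t := ht
      rw [intervalIntegral.integral_of_le (hε.le.trans ht)]
      have h1 : ∫ s in Set.Ioc 0 t, T (t - s) (u s) =
          ∫ s in Set.Ioc 0 t, Set.indicator (Set.Ioc 0 ε) (fun _ => ε⁻¹ • T t x) s := by
        refine setIntegral_congr_fun measurableSet_Ioc ?_
        intro s hs
        by_cases h : s ∈ Set.Ioc 0 ε
        · have h2 := hTadd (t - s) s (by linarith [hs.2]) hs.1.le
          rw [sub_add_cancel] at h2
          simp only [hu, Set.indicator_of_mem h, map_smul]
          rw [h2]; rfl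
        · simp only [hu, Set.indicator_of_notMem h, map_zero]
      have h3 : Set.Ioc 0 t ∩ Set.Ioc 0 ε = Set.Ioc 0 ε :=
        Set.inter_eq_right.2 (Set.Ioc_subset_Ioc_right ht)
      rw [h1, setIntegral_indicator measurableSet_Ioc, h3, setIntegral_const]
      simp [hε.le, smul_smul, hε.ne']
    have hnorm : ∫ s in Set.Ici (0:ℝ), ‖u s‖ ≤ M * ‖x‖ := by
      have h1 : (fun s => ‖u s‖) = Set.indicator (Set.Ioc 0 ε) (fun s => ‖ε⁻¹ • T s x‖) := by
        funext s
        simp only [hu, norm_indicator_eq_indicator_norm]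
      have h3 : Set.Ici 0 ∩ Set.Ioc 0 ε = Set.Ioc 0 ε :=
        Set.inter_eq_right.2 (fun s hs => hs.1.le)
      rw [h1, setIntegral_indicator measurableSet_Ioc, h3]
      have h4 : ∫ s in Set.Ioc 0 ε, ‖ε⁻¹ • T s x‖ ≤ ∫ s in Set.Ioc 0 ε, ε⁻¹ * (M * ‖x‖) := by
        refine setIntegral_mono_on hIcc.norm (integrableOn_const (by simp)) measurableSet_Ioc ?_
        intro s hs
        rw [norm_smul, Real.norm_of_nonneg (inv_nonneg.2 hε.le)]
        refine mul_le_mul_of_nonneg_left ?_ (inv_nonneg.2 hε.le)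
        refine (T s).le_of_opNorm_le ((hTbound s hs.1.le).trans ?_) x
        refine mul_le_mul_of_nonneg_left ?_ hρ.le
        rcases le_total ω 0 with h | h
        · refine le_max_of_le_left (Real.exp_le_one_iff.2 (mul_nonpos_of_nonpos_of_nonneg h hs.1.le))
        · refine le_max_of_le_right (Real.exp_le_exp.2 ?_)
          nlinarith [hs.2]
      refine h4.trans_eq ?_
      rw [setIntegral_const]
      simp [hε.le, hε.ne']
    calc ∫⁻ t in Set.Ici ε, (‖C (T t x)‖₊ : ENNReal)
        = ∫⁻ t in Set.Ici ε, (‖C (∫ s in (0:ℝ)..t, T (t - s) (u s))‖₊ : ENNReal) := by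
          refine setLIntegral_congr_fun measurableSet_Ici ?_
          intro t ht
          simp only [hconv t ht]
      _ ≤ ∫⁻ t in Set.Ici 0, (‖C (∫ s in (0:ℝ)..t, T (t - s) (u s))‖₊ : ENNReal) :=
          lintegral_mono_set (Set.Ici_subset_Ici.2 hε.le)
      _ ≤ _ := hb
      _ ≤ _ := by
          refine ENNReal.ofReal_le_ofReal ?_
          calc _ ≤ c * (M * ‖x‖) := mul_le_mul_of_nonneg_left hnorm hc.le
            _ = _ := by rw [hM]; ring
  have hU : Set.Ioi (0:ℝ) = ⋃ n : ℕ, Set.Ici (1 / ((n:ℝ) + 1)) := by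
    ext t
    simp only [Set.mem_Ioi, Set.mem_iUnion, Set.mem_Ici]
    constructor
    · intro ht
      obtain ⟨n, hn⟩ := exists_nat_one_div_lt ht
      exact ⟨n, hn.le⟩
    · rintro ⟨n, hn⟩
      exact lt_of_lt_of_le Nat.one_div_pos_of_nat hn
  rw [← setLIntegral_congr Ioi_ae_eq_Ici, hU, setLIntegral_iUnion_of_directed]
  · refine iSup_le fun n => key _ Nat.one_div_pos_of_nat ?_
    rw [div_le_one (by positivity)]
    linarith [(Nat.cast_nonneg n : (0:ℝ) ≤ n)]
  · refine Monotone.directed_le ?_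
    intro m n hmn
    exact Set.Ici_subset_Ici.2 (Nat.one_div_le_one_div hmn)
end

section
/- Let X and Y be Banach spaces, let (T(t))_{t≥0} be a strongly continuous semigroup of bounded linear operators on X, and let C : X → Y be a bounded linear operator which is infinite-time L¹-observation-admissible with constant κ, i.e. ∫₀^∞ ‖C(T(t)x)‖_Y dt ≤ κ‖x‖_X for all x ∈ X. Then for every h > 0 and every sequence (x_k)_{k≥1} in X with ∑_{k=1}^∞ ‖x_k‖_X < ∞, one has ∑_{n=1}^∞ ‖ ∑_{k=1}^{n} C( ∫₀^h T((n−k)h + τ) x_k dτ ) ‖_Y ≤ κ ∑_{k=1}^∞ ‖x_k‖_X. -/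
open MeasureTheory

/-- If `C` is infinite-time `L¹`-observation-admissible with constant `κ` for a
`C₀`-semigroup `T` on `X`, then for every `h > 0` and every absolutely summable sequence
`(x_k)` in `X`, `∑_n ‖∑_{k ≤ n} C (∫₀^h T((n-k)h + τ) x_k dτ)‖ ≤ κ ∑_k ‖x_k‖`. -/
theorem stmt_8 {X Y : Type*} [NormedAddCommGroup X] [NormedSpace ℝ X] [CompleteSpace X]
    [NormedAddCommGroup Y] [NormedSpace ℝ Y] [CompleteSpace Y]
    (T : ℝ → X →L[ℝ] X)
    (hT0 : T 0 = 1)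
    (hTadd : ∀ s t : ℝ, 0 ≤ s → 0 ≤ t → T (s + t) = (T s).comp (T t))
    (hTcont : ∀ x : X, ContinuousOn (fun t => T t x) (Set.Ici 0))
    (C : X →L[ℝ] Y) (κ : ℝ) (hκ : 0 ≤ κ)
    (hadm : ∀ x : X,
      ∫⁻ t in Set.Ici (0:ℝ), (‖C (T t x)‖₊ : ENNReal) ≤ ENNReal.ofReal (κ * ‖x‖))
    (h : ℝ) (hh : 0 < h) (x : ℕ → X) (hx : Summable fun k => ‖x k‖) :
    ∑' n : ℕ, (‖∑ k ∈ Finset.range (n + 1),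
        C (∫ τ in (0:ℝ)..h, T (((n - k : ℕ) : ℝ) * h + τ) (x k))‖₊ : ENNReal) ≤
      ENNReal.ofReal (κ * ∑' k : ℕ, ‖x k‖) := by
  have key : ∀ (m : ℕ) (y : X), (‖C (∫ τ in (0:ℝ)..h, T ((m : ℝ) * h + τ) y)‖₊ : ENNReal) ≤
      ∫⁻ t in Set.Ioc ((m : ℝ) * h) (((m + 1 : ℕ) : ℝ) * h), (‖C (T t y)‖₊ : ENNReal) := by
    intro m y
    have hm : (0:ℝ) ≤ (m : ℝ) * h := by positivity
    have hle : (m : ℝ) * h ≤ ((m + 1 : ℕ) : ℝ) * h := by push_cast; nlinarith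
    have e : (∫ τ in (0:ℝ)..h, T ((m : ℝ) * h + τ) y) =
        ∫ t in ((m : ℝ) * h)..(((m + 1 : ℕ) : ℝ) * h), T t y := by
      rw [intervalIntegral.integral_comp_add_left (fun t => T t y) ((m : ℝ) * h)]
      congr 1
      · ring
      · push_cast; ring
    have hint : IntervalIntegrable (fun t => T t y) volume ((m : ℝ) * h)
        (((m + 1 : ℕ) : ℝ) * h) := by
      apply ContinuousOn.intervalIntegrable
      apply (hTcont y).mono
      rw [Set.uIcc_of_le hle]
      intro t ht
      exact hm.trans ht.1
    rw [e, ← C.intervalIntegral_comp_comm hint, intervalIntegral.integral_of_le hle]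
    exact enorm_integral_le_lintegral_enorm _
  have hmono : Monotone (fun m : ℕ => (m : ℝ) * h) := by
    intro a b hab
    have : (a : ℝ) ≤ b := by exact_mod_cast hab
    exact mul_le_mul_of_nonneg_right this hh.le
  have hsum : ∀ y : X, ∑' m : ℕ, ∫⁻ t in Set.Ioc ((m : ℝ) * h) (((m + 1 : ℕ) : ℝ) * h),
      (‖C (T t y)‖₊ : ENNReal) ≤ ENNReal.ofReal (κ * ‖y‖) := by
    intro y
    have hd : Pairwise (Function.onFun Disjoint
        fun m : ℕ => Set.Ioc ((m : ℝ) * h) (((m + 1 : ℕ) : ℝ) * h)) :=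
      hmono.pairwise_disjoint_on_Ioc_succ
    rw [← lintegral_iUnion (fun m => measurableSet_Ioc) hd]
    refine le_trans (lintegral_mono_set ?_) (hadm y)
    refine Set.iUnion_subset fun m t ht => ?_
    have hm : (0:ℝ) ≤ (m : ℝ) * h := by positivity
    exact hm.trans ht.1.le
  set a : ℕ → X → ENNReal := fun m y =>
    ∫⁻ t in Set.Ioc ((m : ℝ) * h) (((m + 1 : ℕ) : ℝ) * h), (‖C (T t y)‖₊ : ENNReal) with ha
  calc _ ≤ ∑' n : ℕ, ∑ k ∈ Finset.range (n + 1), a (n - k) (x k) := by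
        refine ENNReal.tsum_le_tsum fun n => ?_
        refine le_trans (b := ∑ k ∈ Finset.range (n + 1),
          ‖C (∫ τ in (0:ℝ)..h, T (((n - k : ℕ) : ℝ) * h + τ) (x k))‖ₑ) (enorm_sum_le _ _) ?_
        exact Finset.sum_le_sum fun k _ => key (n - k) (x k)
    _ = ∑' n : ℕ, ∑ p ∈ Finset.HasAntidiagonal.antidiagonal n, a p.2 (x p.1) := by
        refine tsum_congr fun n => ?_
        rw [Finset.Nat.sum_antidiagonal_eq_sum_range_succ (fun i j => a j (x i))]
    _ = ∑' p : ℕ × ℕ, a p.2 (x p.1) := by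
        rw [← (Finset.HasAntidiagonal.sigmaAntidiagonalEquivProd (A := ℕ)).tsum_eq, ENNReal.tsum_sigma']
        refine tsum_congr fun n => ?_
        rw [tsum_fintype]
        exact (Finset.sum_coe_sort (Finset.HasAntidiagonal.antidiagonal n) (fun p => a p.2 (x p.1))).symm
    _ = ∑' k : ℕ, ∑' m : ℕ, a m (x k) := ENNReal.tsum_prod (f := fun k m => a m (x k))
    _ ≤ ∑' k : ℕ, ENNReal.ofReal (κ * ‖x k‖) := ENNReal.tsum_le_tsum fun k => hsum (x k)
    _ = _ := by
        rw [← tsum_mul_left, ENNReal.ofReal_tsum_of_nonneg (fun k => by positivity)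
          (hx.mul_left κ)]
end

section
/- Let X, U, Y be Banach spaces, let (T(t))_{t≥0} be a strongly continuous semigroup of bounded linear operators on X, let B : U → X and D : U → Y be bounded linear operators, and let C : X → Y be a bounded linear operator which is infinite-time L¹-observation-admissible with constant κ, i.e. ∫₀^∞ ‖C(T(t)x)‖_Y dt ≤ κ‖x‖_X for all x ∈ X. Then for every Bochner-integrable u ∈ L¹([0,∞),U), the output y(t) := C(∫₀ᵗ T(t−s) B u(s) ds) + D(u(t)) lies in L¹([0,∞),Y) and satisfies ∫₀^∞ ‖y(t)‖_Y dt ≤ (κ‖B‖ + ‖D‖) ∫₀^∞ ‖u(s)‖_U ds. (Thus a system with bounded input operator, bounded feedthrough, and infinite-time L¹-admissible observation operator is L¹-to-L¹ (LILO) stable.) -/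
open MeasureTheory

theorem aux_joint {X : Type*} [NormedAddCommGroup X] [NormedSpace ℝ X] [CompleteSpace X]
    (S : ℝ → X →L[ℝ] X) (hS : ∀ x, Continuous (fun t => S t x)) :
    Continuous (fun p : ℝ × X => S p.1 p.2) := by
  rw [continuous_iff_continuousAt]
  rintro ⟨t0, x0⟩
  obtain ⟨M, hM⟩ : ∃ M, ∀ i : Set.Icc (t0 - 1) (t0 + 1), ‖S i‖ ≤ M := by
    apply banach_steinhaus
    intro x
    obtain ⟨c, hc⟩ := (isCompact_Icc (a := t0 - 1) (b := t0 + 1)).exists_bound_of_continuousOn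
      (hS x).continuousOn
    exact ⟨c, fun i => hc i i.2⟩
  have h1 : Filter.Tendsto (fun p : ℝ × X => M * ‖p.2 - x0‖ + ‖S p.1 x0 - S t0 x0‖)
      (nhds (t0, x0)) (nhds 0) := by
    have hc : Continuous (fun p : ℝ × X => M * ‖p.2 - x0‖ + ‖S p.1 x0 - S t0 x0‖) := by
      have := (hS x0).comp (continuous_fst (X := ℝ) (Y := X))
      have h3 : Continuous (fun p : ℝ × X => S p.1 x0) := this
      fun_prop
    have := hc.tendsto (t0, x0)
    simpa using this
  rw [ContinuousAt, tendsto_iff_norm_sub_tendsto_zero]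
  refine squeeze_zero' (Filter.Eventually.of_forall fun _ => norm_nonneg _) ?_ h1
  have hn : ∀ᶠ p : ℝ × X in nhds (t0, x0), p.1 ∈ Set.Icc (t0 - 1) (t0 + 1) :=
    (continuous_fst.tendsto (t0, x0)).eventually (Icc_mem_nhds (by simp) (by simp))
  filter_upwards [hn] with p hp
  have e : S p.1 p.2 - S t0 x0 = S p.1 (p.2 - x0) + (S p.1 x0 - S t0 x0) := by
    rw [map_sub]; abel
  rw [e]
  refine (norm_add_le _ _).trans ?_
  gcongr
  exact (S p.1).le_of_opNorm_le (hM ⟨p.1, hp⟩) _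

/-- A system with bounded input operator `B`, bounded feedthrough `D`, and infinite-time
`L¹`-observation-admissible (with constant `κ`) bounded observation operator `C` is
`L¹`-to-`L¹` (LILO) stable: for every `u ∈ L¹([0,∞),U)` the output
`y t = C (∫₀ᵗ T(t-s) B u(s) ds) + D (u t)` is in `L¹([0,∞),Y)` with
`‖y‖_{L¹} ≤ (κ‖B‖ + ‖D‖) ‖u‖_{L¹}`. -/
theorem stmt_13 {X U Y : Type*}
    [NormedAddCommGroup X] [NormedSpace ℝ X] [CompleteSpace X]
    [NormedAddCommGroup U] [NormedSpace ℝ U] [CompleteSpace U]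
    [NormedAddCommGroup Y] [NormedSpace ℝ Y] [CompleteSpace Y]
    (T : ℝ → X →L[ℝ] X)
    (hT0 : T 0 = 1)
    (hTadd : ∀ s t : ℝ, 0 ≤ s → 0 ≤ t → T (s + t) = (T s).comp (T t))
    (hTcont : ∀ x : X, ContinuousOn (fun t => T t x) (Set.Ici 0))
    (B : U →L[ℝ] X) (D : U →L[ℝ] Y) (C : X →L[ℝ] Y)
    (κ : ℝ) (hκ : 0 ≤ κ)
    (hadm : ∀ x : X,
      ∫⁻ t in Set.Ici (0:ℝ), (‖C (T t x)‖₊ : ENNReal) ≤ ENNReal.ofReal (κ * ‖x‖))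
    (u : ℝ → U) (hu : IntegrableOn u (Set.Ici 0)) :
    IntegrableOn
      (fun t => C (∫ s in (0:ℝ)..t, T (t - s) (B (u s))) + D (u t)) (Set.Ici 0) ∧
    ∫ t in Set.Ici (0:ℝ), ‖C (∫ s in (0:ℝ)..t, T (t - s) (B (u s))) + D (u t)‖ ≤
      (κ * ‖B‖ + ‖D‖) * ∫ s in Set.Ici (0:ℝ), ‖u s‖ := by
  set S : ℝ → X →L[ℝ] X := fun t => T (max t 0) with hSdef
  have hScont : ∀ x, Continuous (fun t => S t x) := fun x =>
    (hTcont x).comp_continuous (continuous_id.max continuous_const) (fun t => Set.mem_Ici.2 (le_max_right _ _))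
  have hJ := aux_joint S hScont
  obtain ⟨w, hw, huw⟩ := hu.1
  set A : Set (ℝ × ℝ) := {p | 0 < p.2 ∧ p.2 ≤ p.1} with hA
  have hAm : MeasurableSet A :=
    (measurableSet_lt measurable_const measurable_snd).inter
      (measurableSet_le measurable_snd measurable_fst)
  set F : ℝ × ℝ → X := A.indicator (fun p => S (p.1 - p.2) (B (w p.2))) with hF
  have hFm : StronglyMeasurable F := by
    refine StronglyMeasurable.indicator ?_ hAm
    have h1 : StronglyMeasurable (fun p : ℝ × ℝ => (p.1 - p.2, B (w p.2))) := by
      refine StronglyMeasurable.prodMk (by fun_prop) ?_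
      exact B.continuous.comp_stronglyMeasurable (hw.comp_measurable measurable_snd)
    exact hJ.comp_stronglyMeasurable h1
  set G : ℝ → X := fun t => ∫ s, F (t, s) with hG
  have hGm : StronglyMeasurable G := hFm.integral_prod_right'
  have hCG : StronglyMeasurable (fun t => C (G t)) := C.continuous.comp_stronglyMeasurable hGm
  have hCF : StronglyMeasurable (fun p => C (F p)) := C.continuous.comp_stronglyMeasurable hFm
  have hGeq : ∀ t ∈ Set.Ici (0:ℝ), ∫ s in (0:ℝ)..t, T (t - s) (B (u s)) = G t := by
    intro t ht
    rw [intervalIntegral.integral_of_le ht, hG]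
    have e : ∀ s, F (t, s) = (Set.Ioc 0 t).indicator (fun s => S (t - s) (B (w s))) s := by
      intro s
      simp only [hF, Set.indicator, hA, Set.mem_setOf_eq, Set.mem_Ioc]
    simp only [e]
    rw [integral_indicator measurableSet_Ioc]
    have h2 : ∀ᵐ s ∂(volume.restrict (Set.Ioc 0 t)), u s = w s :=
      ae_restrict_of_ae_restrict_of_subset (fun s hs => hs.1.le) huw
    apply integral_congr_ae
    filter_upwards [h2, ae_restrict_mem measurableSet_Ioc] with s hs hst
    simp only [hSdef, hs, max_eq_left (sub_nonneg.2 hst.2)]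
  have hnorm : ∀ t, ‖C (G t)‖ₑ ≤ ∫⁻ s, ‖C (F (t, s))‖ₑ := by
    intro t
    by_cases hi : Integrable (fun s => F (t, s))
    · rw [hG]
      simp only
      rw [← C.integral_comp_comm hi]
      exact enorm_integral_le_lintegral_enorm _
    · simp only [hG]
      rw [integral_undef hi]; simp
  have hinner : ∀ s, ∫⁻ t in Set.Ici (0:ℝ), ‖C (F (t, s))‖ₑ ≤
      (Set.Ici (0:ℝ)).indicator (fun s => ENNReal.ofReal (κ * ‖B‖) * ‖w s‖ₑ) s := by
    intro s
    by_cases hs : 0 < s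
    · rw [Set.indicator_of_mem (show s ∈ Set.Ici (0:ℝ) from hs.le)]
      calc ∫⁻ t in Set.Ici (0:ℝ), ‖C (F (t, s))‖ₑ ≤ ∫⁻ t, ‖C (F (t, s))‖ₑ :=
            setLIntegral_le_lintegral _ _
        _ = ∫⁻ t, ‖C (F (t + s, s))‖ₑ :=
            (lintegral_add_right_eq_self (fun t => ‖C (F (t, s))‖ₑ) s).symm
        _ = ∫⁻ t, (Set.Ici (0:ℝ)).indicator (fun t => ‖C (T t (B (w s)))‖ₑ) t := by
            congr 1
            ext t
            by_cases ht : 0 ≤ t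
            · simp [hF, hA, Set.indicator, hs, ht, hSdef]
            · simp [hF, hA, Set.indicator, ht]
        _ = ∫⁻ t in Set.Ici (0:ℝ), ‖C (T t (B (w s)))‖ₑ :=
            lintegral_indicator measurableSet_Ici _
        _ ≤ ENNReal.ofReal (κ * ‖B (w s)‖) := hadm _
        _ ≤ ENNReal.ofReal (κ * ‖B‖ * ‖w s‖) := by
            apply ENNReal.ofReal_le_ofReal
            rw [mul_assoc]
            exact mul_le_mul_of_nonneg_left (B.le_opNorm _) hκ
        _ = _ := by
            rw [ENNReal.ofReal_mul (by positivity), ofReal_norm_eq_enorm]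
    · have : ∀ t, F (t, s) = 0 := fun t => by simp [hF, hA, Set.indicator, hs]
      simp [this]
  have hmain : ∫⁻ t in Set.Ici (0:ℝ), ‖C (G t)‖ₑ ≤
      ENNReal.ofReal (κ * ‖B‖) * ∫⁻ s in Set.Ici (0:ℝ), ‖u s‖ₑ := by
    calc ∫⁻ t in Set.Ici (0:ℝ), ‖C (G t)‖ₑ
        ≤ ∫⁻ t in Set.Ici (0:ℝ), ∫⁻ s, ‖C (F (t, s))‖ₑ := lintegral_mono hnorm
      _ = ∫⁻ s, ∫⁻ t in Set.Ici (0:ℝ), ‖C (F (t, s))‖ₑ :=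
          lintegral_lintegral_swap (hCF.enorm.aemeasurable)
      _ ≤ ∫⁻ s, (Set.Ici (0:ℝ)).indicator (fun s => ENNReal.ofReal (κ * ‖B‖) * ‖w s‖ₑ) s :=
          lintegral_mono hinner
      _ = ∫⁻ s in Set.Ici (0:ℝ), ENNReal.ofReal (κ * ‖B‖) * ‖w s‖ₑ :=
          lintegral_indicator measurableSet_Ici _
      _ = ENNReal.ofReal (κ * ‖B‖) * ∫⁻ s in Set.Ici (0:ℝ), ‖w s‖ₑ :=
          lintegral_const_mul _ hw.enorm
      _ = _ := by
          congr 1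
          apply lintegral_congr_ae
          filter_upwards [huw] with s hs
          rw [hs]
  have hufin : ∫⁻ s in Set.Ici (0:ℝ), ‖u s‖ₑ < ⊤ := hu.2
  have hCGi : IntegrableOn (fun t => C (G t)) (Set.Ici 0) :=
    ⟨hCG.aestronglyMeasurable, hmain.trans_lt (ENNReal.mul_lt_top ENNReal.ofReal_lt_top hufin)⟩
  have hDi : IntegrableOn (fun t => D (u t)) (Set.Ici 0) := D.integrable_comp hu
  have hbound : ∫ t in Set.Ici (0:ℝ), ‖C (G t)‖ ≤ κ * ‖B‖ * ∫ s in Set.Ici (0:ℝ), ‖u s‖ := by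
    rw [integral_norm_eq_lintegral_enorm hCGi.1, integral_norm_eq_lintegral_enorm hu.1]
    have := ENNReal.toReal_mono (ENNReal.mul_lt_top ENNReal.ofReal_lt_top hufin).ne hmain
    rwa [ENNReal.toReal_mul, ENNReal.toReal_ofReal (by positivity)] at this
  have hEq : Set.EqOn (fun t => C (∫ s in (0:ℝ)..t, T (t - s) (B (u s))) + D (u t))
      (fun t => C (G t) + D (u t)) (Set.Ici 0) := fun t ht => by
    simp only [hGeq t ht]
  refine ⟨(integrableOn_congr_fun hEq measurableSet_Ici).2 (hCGi.add hDi), ?_⟩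
  rw [setIntegral_congr_fun measurableSet_Ici
    (fun t ht => congrArg norm (hEq ht))]
  calc ∫ t in Set.Ici (0:ℝ), ‖C (G t) + D (u t)‖
      ≤ ∫ t in Set.Ici (0:ℝ), (‖C (G t)‖ + ‖D‖ * ‖u t‖) := by
        refine integral_mono (hCGi.add hDi).norm (hCGi.norm.add (hu.norm.const_mul _)) ?_
        intro t
        exact (norm_add_le _ _).trans (add_le_add le_rfl (D.le_opNorm _))
    _ = (∫ t in Set.Ici (0:ℝ), ‖C (G t)‖) + ‖D‖ * ∫ t in Set.Ici (0:ℝ), ‖u t‖ := by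
        rw [integral_add hCGi.norm (hu.norm.const_mul _), integral_const_mul]
    _ ≤ _ := by
        rw [add_mul]
        gcongr
end

section
/- Let X and U be Banach spaces, let (T(t))_{t≥0} be a strongly continuous semigroup of bounded linear operators on X, and let B : U → X be a bounded linear operator. Suppose there exists c > 0 such that for every smooth compactly supported u : (0,∞) → U and every t > 0, ‖∫₀ᵗ T(t−s) B u(s) ds‖_X ≤ c · sup_{s∈[0,t]} ‖u(s)‖_U. Then the same bound holds for every continuous u : [0,∞) → U and every t > 0: ‖∫₀ᵗ T(t−s) B u(s) ds‖_X ≤ c · sup_{s∈[0,t]} ‖u(s)‖_U. (Thus for a system with identity observation and bounded input operator, BIBO stability tested on smooth compactly supported inputs implies the state bound for all continuous inputs, i.e. B is infinite-time C-control-admissible.) -/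
open MeasureTheory

lemma aux_bound {X : Type*} [NormedAddCommGroup X] [NormedSpace ℝ X] [CompleteSpace X]
    (T : ℝ → X →L[ℝ] X) (hTcont : ∀ x : X, ContinuousOn (fun t => T t x) (Set.Ici 0)) (t : ℝ) :
    ∃ K : ℝ, 0 ≤ K ∧ ∀ s ∈ Set.Icc (0:ℝ) t, ‖T s‖ ≤ K := by
  have h : ∀ x : X, ∃ C, ∀ i : Set.Icc (0:ℝ) t, ‖(T i) x‖ ≤ C := by
    intro x
    obtain ⟨C, hC⟩ := isCompact_Icc.exists_bound_of_continuousOn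
      ((hTcont x).mono (Set.Icc_subset_Ici_self : Set.Icc (0:ℝ) t ⊆ _))
    exact ⟨C, fun i => hC i i.2⟩
  obtain ⟨K, hK⟩ := banach_steinhaus h
  exact ⟨max K 0, le_max_right _ _, fun s hs => (hK ⟨s, hs⟩).trans (le_max_left _ _)⟩

lemma aux_cont {X : Type*} [NormedAddCommGroup X] [NormedSpace ℝ X] [CompleteSpace X]
    (T : ℝ → X →L[ℝ] X) (hTcont : ∀ x : X, ContinuousOn (fun t => T t x) (Set.Ici 0)) (t : ℝ)
    (f : ℝ → X) (hf : Continuous f) :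
    ContinuousOn (fun s => T (t - s) (f s)) (Set.Icc 0 t) := by
  obtain ⟨K, hK0, hK⟩ := aux_bound T hTcont t
  intro a ha
  have h1 : Filter.Tendsto (fun s => T (t - s) (f a)) (nhdsWithin a (Set.Icc 0 t))
      (nhds (T (t - a) (f a))) := by
    have : ContinuousOn (fun s => T (t - s) (f a)) (Set.Icc 0 t) :=
      (hTcont (f a)).comp (f := fun s => t - s) (by fun_prop)
        (fun s hs => by simpa using hs.2)
    exact this a ha
  have h2 : Filter.Tendsto (fun s => T (t - s) (f s - f a)) (nhdsWithin a (Set.Icc 0 t))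
      (nhds 0) := by
    have h3 : Filter.Tendsto (fun s => K * ‖f s - f a‖) (nhdsWithin a (Set.Icc 0 t))
        (nhds 0) := by
      have : Continuous (fun s => K * ‖f s - f a‖) := by fun_prop
      have := this.tendsto a
      simp only [sub_self, norm_zero, mul_zero] at this
      exact this.mono_left nhdsWithin_le_nhds
    refine squeeze_zero_norm' ?_ h3
    filter_upwards [self_mem_nhdsWithin] with s hs
    refine (T (t - s)).le_of_opNorm_le (hK _ ⟨?_, ?_⟩) _
    · linarith [hs.2]
    · linarith [hs.1]
  have h4 := h2.add h1
  simp only [zero_add] at h4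
  refine h4.congr fun s => ?_
  simp

/-- For a system with identity observation and bounded input operator `B`, BIBO stability
tested on smooth compactly supported inputs (in `(0,∞)`) implies the same state bound for
all continuous inputs, i.e. `B` is infinite-time `C`-control-admissible. -/
theorem stmt_14 {X U : Type*}
    [NormedAddCommGroup X] [NormedSpace ℝ X] [CompleteSpace X]
    [NormedAddCommGroup U] [NormedSpace ℝ U] [CompleteSpace U]
    (T : ℝ → X →L[ℝ] X)
    (hT0 : T 0 = 1)
    (hTadd : ∀ s t : ℝ, 0 ≤ s → 0 ≤ t → T (s + t) = (T s).comp (T t))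
    (hTcont : ∀ x : X, ContinuousOn (fun t => T t x) (Set.Ici 0))
    (B : U →L[ℝ] X) (c : ℝ) (hc : 0 < c)
    (hbound : ∀ u : ℝ → U, ContDiff ℝ (⊤ : ℕ∞) u → HasCompactSupport u →
      tsupport u ⊆ Set.Ioi 0 →
      ∀ t > (0:ℝ), ‖∫ s in (0:ℝ)..t, T (t - s) (B (u s))‖ ≤
        c * ⨆ s ∈ Set.Icc (0:ℝ) t, ‖u s‖) :
    ∀ u : ℝ → U, ContinuousOn u (Set.Ici 0) →
      ∀ t > (0:ℝ), ‖∫ s in (0:ℝ)..t, T (t - s) (B (u s))‖ ≤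
        c * ⨆ s ∈ Set.Icc (0:ℝ) t, ‖u s‖ := by
  intro u hu t ht
  set M : ℝ := ⨆ s ∈ Set.Icc (0:ℝ) t, ‖u s‖ with hM
  obtain ⟨K, hK0, hK⟩ := aux_bound T hTcont t
  have huM : ∀ s ∈ Set.Icc (0:ℝ) t, ‖u s‖ ≤ M := by
    obtain ⟨C, hC⟩ := isCompact_Icc.exists_bound_of_continuousOn
      (hu.mono (Set.Icc_subset_Ici_self : Set.Icc (0:ℝ) t ⊆ _))
    intro s hs
    have hb : BddAbove (Set.range fun s => ⨆ (_ : s ∈ Set.Icc (0:ℝ) t), ‖u s‖) := by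
      refine ⟨max C 0, ?_⟩
      rintro _ ⟨r, rfl⟩
      exact Real.iSup_le (fun h => (hC r h).trans (le_max_left _ _)) (le_max_right _ _)
    have := le_ciSup hb s
    rw [ciSup_pos hs] at this
    exact this
  have hM0 : 0 ≤ M := (norm_nonneg _).trans (huM 0 ⟨le_rfl, ht.le⟩)
  -- continuous extension
  set w : ℝ → U := Set.IccExtend ht.le (fun s : Set.Icc (0:ℝ) t => u s) with hw
  have hwc : Continuous w := by
    refine Continuous.Icc_extend' ?_
    exact (hu.mono Set.Icc_subset_Ici_self).domRestrict
  have hwu : ∀ s ∈ Set.Icc (0:ℝ) t, w s = u s := fun s hs => by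
    rw [hw, Set.IccExtend_of_mem _ _ hs]
  have happ : ∀ n : ℕ, ∃ g : ℝ → U, ContDiff ℝ (⊤ : ℕ∞) g ∧
      ∀ x, dist (g x) (w x) < 1 / ((n:ℝ) + 1) := by
    intro n
    obtain ⟨g, hg, hg', -⟩ := hwc.exists_contDiff_approx ⊤
      (continuous_const : Continuous fun _ : ℝ => 1 / ((n:ℝ) + 1)) (fun _ => by positivity)
    exact ⟨g, hg, hg'⟩
  choose g hg hgw using happ
  have hφ : ∀ n : ℕ, ∃ φ : ContDiffBump t,
      φ.rIn = t * (1 - 1 / ((n:ℝ) + 2)) ∧ φ.rOut = t * (1 - 1 / ((n:ℝ) + 3)) := by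
    intro n
    refine ⟨⟨t * (1 - 1 / ((n:ℝ) + 2)), t * (1 - 1 / ((n:ℝ) + 3)), ?_, ?_⟩, rfl, rfl⟩
    · apply mul_pos ht
      rw [sub_pos, div_lt_one (by positivity)]
      linarith [(Nat.cast_nonneg n : (0:ℝ) ≤ n)]
    · apply mul_lt_mul_of_pos_left _ ht
      apply sub_lt_sub_left
      apply one_div_lt_one_div_of_lt (by positivity)
      linarith
  choose φ hφi hφo using hφ
  set v : ℕ → ℝ → U := fun n s => φ n s • g n s with hv
  have hvs : ∀ n, ContDiff ℝ (⊤ : ℕ∞) (v n) := fun n => (φ n).contDiff.smul (hg n)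
  have hvc : ∀ n, HasCompactSupport (v n) := fun n => (φ n).hasCompactSupport.smul_right
  have hvt : ∀ n, tsupport (v n) ⊆ Set.Ioi 0 := by
    intro n s hs
    have h1 : s ∈ tsupport (φ n) := tsupport_smul_subset_left _ _ hs
    rw [(φ n).tsupport_eq, Metric.mem_closedBall, Real.dist_eq, hφo] at h1
    have h2 := (abs_le.1 h1).1
    have h3 : 0 < t * (1 / ((n:ℝ) + 3)) := by positivity
    show 0 < s
    nlinarith
  have hvb : ∀ n, ∀ s ∈ Set.Icc (0:ℝ) t, ‖v n s‖ ≤ M + 1 / ((n:ℝ) + 1) := by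
    intro n s hs
    have h1 : ‖g n s‖ ≤ M + 1 / ((n:ℝ) + 1) := by
      have h2 := (hgw n s).le
      rw [hwu s hs, dist_eq_norm] at h2
      have h3 := norm_add_le (u s) (g n s - u s)
      rw [add_sub_cancel] at h3
      linarith [huM s hs]
    rw [hv]
    simp only [norm_smul, Real.norm_eq_abs, abs_of_nonneg (φ n).nonneg]
    calc φ n s * ‖g n s‖ ≤ 1 * ‖g n s‖ :=
          mul_le_mul_of_nonneg_right (φ n).le_one (norm_nonneg _)
      _ ≤ _ := by rwa [one_mul]
  have hlim0 : Filter.Tendsto (fun n : ℕ => 1 / ((n:ℝ) + 1)) Filter.atTop (nhds 0) :=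
    tendsto_one_div_add_atTop_nhds_zero_nat
  have hvlim : ∀ s ∈ Set.Ioc (0:ℝ) t,
      Filter.Tendsto (fun n => v n s) Filter.atTop (nhds (u s)) := by
    intro s hs
    have hs' : s ∈ Set.Icc (0:ℝ) t := ⟨hs.1.le, hs.2⟩
    have h1 : Filter.Tendsto (fun n => g n s) Filter.atTop (nhds (u s)) := by
      rw [tendsto_iff_dist_tendsto_zero]
      refine squeeze_zero (fun _ => dist_nonneg) (fun n => ?_) hlim0
      rw [← hwu s hs']
      exact (hgw n s).le
    refine h1.congr' ?_
    have h2 : ∀ᶠ n : ℕ in Filter.atTop, 1 / ((n:ℝ) + 1) < s / t :=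
      hlim0.eventually_lt_const (div_pos hs.1 ht)
    filter_upwards [h2] with n hn
    have h3 : φ n s = 1 := by
      apply (φ n).one_of_mem_closedBall
      rw [Metric.mem_closedBall, Real.dist_eq, hφi, abs_sub_comm, abs_of_nonneg (by linarith [hs.2])]
      have h4 : 1 / ((n:ℝ) + 2) ≤ 1 / ((n:ℝ) + 1) :=
        one_div_le_one_div_of_le (by positivity) (by linarith)
      have h5 := h4.trans hn.le
      rw [le_div_iff₀ ht] at h5
      linarith
    simp [hv, h3]
  have hmain : Filter.Tendsto (fun n => ∫ s in (0:ℝ)..t, T (t - s) (B (v n s))) Filter.atTop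
      (nhds (∫ s in (0:ℝ)..t, T (t - s) (B (u s)))) := by
    apply intervalIntegral.tendsto_integral_filter_of_dominated_convergence
      (fun _ => K * (‖B‖ * (M + 1)))
    · refine Filter.Eventually.of_forall fun n => ?_
      rw [Set.uIoc_of_le ht.le]
      exact ((aux_cont T hTcont t (fun s => B (v n s))
        (B.continuous.comp (hvs n).continuous)).mono
          Set.Ioc_subset_Icc_self).aestronglyMeasurable measurableSet_Ioc
    · refine Filter.Eventually.of_forall fun n => Filter.Eventually.of_forall fun s hs => ?_
      rw [Set.uIoc_of_le ht.le] at hs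
      refine (T (t - s)).le_of_opNorm_le_of_le (hK _ ⟨by linarith [hs.2], by linarith [hs.1]⟩) ?_
      refine B.le_opNorm_of_le ((hvb n s ⟨hs.1.le, hs.2⟩).trans ?_)
      have : 1 / ((n:ℝ) + 1) ≤ 1 := by
        rw [div_le_one (by positivity)]
        linarith [(Nat.cast_nonneg n : (0:ℝ) ≤ n)]
      linarith
    · exact intervalIntegrable_const
    · refine Filter.Eventually.of_forall fun s hs => ?_
      rw [Set.uIoc_of_le ht.le] at hs
      exact (((T (t - s)).continuous.comp B.continuous).tendsto _).comp (hvlim s hs)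
  have hR : Filter.Tendsto (fun n : ℕ => c * (M + 1 / ((n:ℝ) + 1))) Filter.atTop
      (nhds (c * M)) := by
    simpa using (hlim0.const_add M).const_mul c
  refine le_of_tendsto_of_tendsto' hmain.norm hR fun n => ?_
  refine (hbound (v n) (hvs n) (hvc n) (hvt n) t ht).trans ?_
  have hp : 0 ≤ M + 1 / ((n:ℝ) + 1) := by positivity
  exact mul_le_mul_of_nonneg_left
    (Real.iSup_le (fun s => Real.iSup_le (fun hs => hvb n s hs) hp) hp) hc.le
end
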